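/- arXiv:1912.09360 — 5 statements merged into one kernel-verified Lean document; each statement's English description precedes it below -/
import Mathlib

section
/- Let T be a spanning tree of G. If T is a minimum spanning tree of G, then for every nontree edge {i,j} of G and every edge {u,v} on the unique path in T connecting i and j, one has w({i,j}) ≥ w({u,v}). -/
open SimpleGraph

/-- `T` is a spanning tree of `G`: a connected acyclic (spanning) subgraph of `G`. -/
def IsSpanningTree {V : Type*} (G T : SimpleGraph V) : Prop :=
  T ≤ G ∧ T.IsTree

/-- The cost of a graph: the sum of the weights of its edges. -/
noncomputable def cost {V : Type*} (w : Sym2 V → ℝ) (T : SimpleGraph V) : ℝ :=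
  ∑ᶠ e ∈ T.edgeSet, w e

/-- `T` is a minimum spanning tree of `G` with respect to the weights `w`. -/
def IsMST {V : Type*} (G : SimpleGraph V) (w : Sym2 V → ℝ) (T : SimpleGraph V) : Prop :=
  IsSpanningTree G T ∧ ∀ T' : SimpleGraph V, IsSpanningTree G T' → cost w T ≤ cost w T'

/-!
Exchanging an edge `f` on the tree path from `i` to `j` for `{i, j}` gives another spanning tree:
removing `f` splits `T` into two components, which contain `i` and `j` respectively, and `{i, j}`
joins them again. The exchange changes the cost by `w {i, j} - w f`, so minimality of `T` makes
this difference nonnegative.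
-/

section Exchange

variable {V : Type*} {G H T : SimpleGraph V} {i j x y : V} {f : Sym2 V}

theorem reachable_of_mem_edges_of_isTrail {p : G.Walk i j} (hp : p.IsTrail)
    (hxy : s(x, y) ∈ p.edges) (hle : G.deleteEdges {s(x, y)} ≤ H) (hij : H.Reachable i j) :
    H.Reachable x y := by
  -- Each end of an edge of a trail is joined to an end of the trail without using that edge.
  have reachable_end {a b : V} (hab : s(a, b) = s(x, y)) : H.Reachable i b := by
    by_contra hib
    have hjb : ¬ H.Reachable j b := fun hjb ↦ hib (hij.trans hjb)
    rw [← hab] at hle hxy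
    exact hp.not_mem_edges_of_not_reachable (mt (.mono hle) hib) (mt (.mono hle) hjb) hxy
  exact (reachable_end Sym2.eq_swap).symm.trans (reachable_end rfl)

theorem not_reachable_deleteEdges_of_mem_edges (hG : G.IsAcyclic) {p : G.Walk i j}
    (hp : p.IsTrail) (hf : f ∈ p.edges) : ¬ (G.deleteEdges {f}).Reachable i j := by
  induction f with
  | h x y =>
    have hbridge : G.IsBridge s(x, y) :=
      isAcyclic_iff_forall_isBridge.1 hG (p.edges_subset_edgeSet hf)
    exact fun hij ↦ hbridge (reachable_of_mem_edges_of_isTrail hp hf le_rfl hij)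

theorem connected_of_forall_adj_reachable (hG : G.Connected)
    (hadj : ∀ ⦃u v⦄, G.Adj u v → H.Reachable u v) : H.Connected := by
  refine (connected_iff H).2 ⟨fun u v ↦ ?_, hG.nonempty⟩
  obtain ⟨p⟩ := hG u v
  induction p with
  | nil => rfl
  | cons h _ ih => exact (hadj h).trans ih

theorem connected_deleteEdges_sup_edge (hG : G.Connected) {p : G.Walk i j} (hp : p.IsTrail)
    (hf : f ∈ p.edges) : (G.deleteEdges {f} ⊔ edge i j).Connected := by
  refine connected_of_forall_adj_reachable hG fun u v huv ↦ ?_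
  by_cases huvf : s(u, v) = f
  · subst huvf
    have hij : (G.deleteEdges {s(u, v)} ⊔ edge i j).Reachable i j := by
      obtain rfl | hne := eq_or_ne i j
      · rfl
      · exact Adj.reachable (Or.inr ((edge_adj ..).2 ⟨Or.inl ⟨rfl, rfl⟩, hne⟩))
    exact reachable_of_mem_edges_of_isTrail hp hf le_sup_left hij
  · exact Adj.reachable (Or.inl (deleteEdges_adj.2 ⟨huv, huvf⟩))

theorem isTree_deleteEdges_sup_edge (hT : T.IsTree) {p : T.Walk i j} (hp : p.IsTrail)
    (hf : f ∈ p.edges) : (T.deleteEdges {f} ⊔ edge i j).IsTree where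
  connected := connected_deleteEdges_sup_edge hT.connected hp hf
  isAcyclic := (hT.isAcyclic.anti (deleteEdges_le _)).sup_edge_of_not_reachable
    (not_reachable_deleteEdges_of_mem_edges hT.isAcyclic hp hf)

theorem IsSpanningTree.deleteEdges_sup_edge (hT : IsSpanningTree G T) (hij : G.Adj i j)
    {p : T.Walk i j} (hp : p.IsTrail) (hf : f ∈ p.edges) :
    IsSpanningTree G (T.deleteEdges {f} ⊔ edge i j) :=
  ⟨sup_le ((deleteEdges_le _).trans hT.1) ((edge_le_iff _).2 (Or.inr hij)),
    isTree_deleteEdges_sup_edge hT.2 hp hf⟩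

end Exchange

section Cost

variable {V : Type*} {w : Sym2 V → ℝ} {G : SimpleGraph V}

theorem cost_deleteEdges_singleton_add (hG : (G.edgeSet ∩ Function.support w).Finite)
    {f : Sym2 V} (hf : f ∈ G.edgeSet) : cost w (G.deleteEdges {f}) + w f = cost w G := by
  rw [cost, cost, edgeSet_deleteEdges, add_comm, ← finsum_mem_singleton (f := w) (a := f)]
  exact finsum_mem_add_sdiff' (Set.singleton_subset_iff.2 hf) hG

theorem cost_sup_edge (hG : (G.edgeSet ∩ Function.support w).Finite) {i j : V} (hne : i ≠ j)
    (hij : ¬ G.Adj i j) : cost w (G ⊔ edge i j) = cost w G + w s(i, j) := by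
  rw [cost, cost, edgeSet_sup, edgeSet_edge_of_ne hne, Set.union_singleton, add_comm]
  exact finsum_mem_insert' w hij hG

end Cost

theorem mst_path_optimality_necessary_general {V : Type*} {G T : SimpleGraph V} {w : Sym2 V → ℝ}
    (hT : IsMST G w T) (hfin : (T.edgeSet ∩ Function.support w).Finite) {i j : V}
    (hij : G.Adj i j) {p : T.Walk i j} (hp : p.IsTrail) {f : Sym2 V} (hf : f ∈ p.edges) :
    w f ≤ w s(i, j) := by
  have hmin : cost w T ≤ cost w (T.deleteEdges {f} ⊔ edge i j) :=
    hT.2 _ (hT.1.deleteEdges_sup_edge hij hp hf)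
  have hdelete : cost w (T.deleteEdges {f}) + w f = cost w T :=
    cost_deleteEdges_singleton_add hfin (p.edges_subset_edgeSet hf)
  have hnadj : ¬ (T.deleteEdges {f}).Adj i j :=
    mt Adj.reachable (not_reachable_deleteEdges_of_mem_edges hT.1.2.isAcyclic hp hf)
  have hfin' : ((T.deleteEdges {f}).edgeSet ∩ Function.support w).Finite :=
    hfin.subset (Set.inter_subset_inter_left _ (edgeSet_mono (deleteEdges_le _)))
  have hinsert : cost w (T.deleteEdges {f} ⊔ edge i j) =
      cost w (T.deleteEdges {f}) + w s(i, j) :=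
    cost_sup_edge hfin' hij.ne hnadj
  linarith

/-- Path Optimality Condition, necessity: if `T` is a minimum spanning tree of `G`,
then for every nontree edge `{i,j}` of `G` and every edge `{u,v}` on the unique
path in `T` from `i` to `j`, `w {i,j} ≥ w {u,v}`. -/
theorem mst_path_optimality_necessary {V : Type*} [Fintype V]
    (G : SimpleGraph V) (hG : G.Connected) (w : Sym2 V → ℝ)
    (T : SimpleGraph V) (hT : IsMST G w T) :
    ∀ i j : V, G.Adj i j → s(i, j) ∉ T.edgeSet →
      ∀ p : T.Walk i j, p.IsPath → ∀ f ∈ p.edges, w s(i, j) ≥ w f :=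
  fun _ _ hij _ _ hp _ hf ↦
    mst_path_optimality_necessary_general hT (Set.toFinite _) hij hp.isTrail hf
end

section
/- Let T be a spanning tree of G. If for every nontree edge {i,j} of G and every edge {u,v} on the unique path in T connecting i and j one has w({i,j}) ≥ w({u,v}), then T is a minimum spanning tree of G. -/
open SimpleGraph

/-!
The condition says that, for every edge `f` of `G`, the edges of `T` of weight at most `w f` connect
the endpoints of `f`. In a spanning tree `T'`, any `k` edges can be replaced by the edges of `T`
that connect their endpoints without losing connectivity, so those must be at least `k` in number.
This is Hall's condition for assigning to the edges of `T'` distinct edges of `T` that are no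
heavier. As all spanning trees have equally many edges, the assignment is a bijection, and summing
over it compares the costs.
-/

section

variable {V : Type*}

theorem reachable_of_forall_adj_reachable {G H : SimpleGraph V}
    (h : ∀ u v, G.Adj u v → H.Reachable u v) {u v : V} (huv : G.Reachable u v) :
    H.Reachable u v := by
  rw [reachable_iff_reflTransGen] at huv ⊢
  exact Relation.reflTransGen_closed
    (fun x y hxy ↦ (reachable_iff_reflTransGen x y).1 (h x y hxy)) u v huv

theorem ncard_le_ncard_of_subset_edgeSet_of_reachable [Finite V] {F : SimpleGraph V}
    (hF : F.IsAcyclic) {s t : Set (Sym2 V)} (hs : s ⊆ F.edgeSet)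
    (hst : ∀ u v, s(u, v) ∈ s → (fromEdgeSet t).Reachable u v) : s.ncard ≤ t.ncard := by
  cases isEmpty_or_nonempty V
  · simp [Set.eq_empty_of_isEmpty]
  obtain ⟨T, hFT, -, hT⟩ := connected_top.exists_isTree_le_of_le_of_isAcyclic le_top hF
  have hsT : s ⊆ T.edgeSet := hs.trans (edgeSet_subset_edgeSet.2 hFT)
  have hconn : (fromEdgeSet (T.edgeSet \ s ∪ t)).Connected := by
    refine (connected_iff _).2 ⟨fun u v ↦ ?_, inferInstance⟩
    refine reachable_of_forall_adj_reachable (fun x y hxy ↦ ?_) (hT.connected u v)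
    by_cases hmem : s(x, y) ∈ s
    · exact (hst x y hmem).mono (fromEdgeSet_mono Set.subset_union_right)
    · exact Adj.reachable ⟨Or.inl ⟨hxy, hmem⟩, hxy.ne⟩
  have hbound : T.edgeSet.ncard + 1 ≤ (T.edgeSet \ s).ncard + t.ncard + 1 := calc
    T.edgeSet.ncard + 1 = Nat.card V := (isTree_iff_connected_and_card.1 hT).2
    _ ≤ (fromEdgeSet (T.edgeSet \ s ∪ t)).edgeSet.ncard + 1 :=
      hconn.card_vert_le_card_edgeSet_add_one
    _ ≤ (T.edgeSet \ s ∪ t).ncard + 1 := by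
      rw [edgeSet_fromEdgeSet]
      gcongr
      exacts [Set.toFinite _, Set.sdiff_subset]
    _ ≤ (T.edgeSet \ s).ncard + t.ncard + 1 := by
      gcongr
      exact Set.ncard_union_le _ _
  have hsdiff := Set.ncard_sdiff_add_ncard_of_subset hsT
  lia

theorem exists_injective_edgeSet_of_reachable [Finite V] {F H : SimpleGraph V}
    (hF : F.IsAcyclic) (r : Sym2 V → Sym2 V → Prop)
    (hr : ∀ u v, F.Adj u v → (fromEdgeSet {e ∈ H.edgeSet | r s(u, v) e}).Reachable u v) :
    ∃ φ : F.edgeSet → H.edgeSet, Function.Injective φ ∧ ∀ f : F.edgeSet, r f (φ f) := by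
  classical
  have := Fintype.ofFinite H.edgeSet
  refine (Fintype.all_card_le_filter_rel_iff_exists_injective
    fun (f : F.edgeSet) (e : H.edgeSet) ↦ r f e).1 fun A ↦ ?_
  set B : Finset H.edgeSet := {e | ∃ f ∈ A, r f e}
  have hAB : ((↑) '' (A : Set F.edgeSet) : Set (Sym2 V)).ncard ≤
      ((↑) '' (B : Set H.edgeSet) : Set (Sym2 V)).ncard := by
    refine ncard_le_ncard_of_subset_edgeSet_of_reachable hF (Subtype.coe_image_subset _ _) ?_
    rintro u v ⟨⟨_, huv⟩, hA, rfl⟩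
    refine (hr u v huv).mono (fromEdgeSet_mono ?_)
    rintro e ⟨he, hre⟩
    exact ⟨⟨e, he⟩, Finset.mem_coe.2 (Finset.mem_filter_univ _ |>.2 ⟨_, hA, hre⟩), rfl⟩
  simpa only [Set.ncard_image_of_injective _ Subtype.val_injective, Set.ncard_coe_finset] using hAB

theorem reachable_fromEdgeSet_setOf_weight_le {α : Type*} [Preorder α] {w : Sym2 V → α}
    {T : SimpleGraph V} {i j : V} (hij : T.Reachable i j)
    (hpath : s(i, j) ∉ T.edgeSet → ∀ p : T.Walk i j, p.IsPath → ∀ f ∈ p.edges, w f ≤ w s(i, j)) :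
    (fromEdgeSet {e ∈ T.edgeSet | w e ≤ w s(i, j)}).Reachable i j := by
  by_cases hadj : T.Adj i j
  · exact Adj.reachable ⟨⟨hadj, le_rfl⟩, hadj.ne⟩
  · obtain ⟨p, hp⟩ := hij.exists_isPath
    refine ⟨p.transfer _ fun f hf ↦ ?_⟩
    have hfT : f ∈ T.edgeSet := p.edges_subset_edgeSet hf
    rw [edgeSet_fromEdgeSet]
    exact ⟨⟨hfT, hpath hadj p hp f hf⟩, T.not_isDiag_of_mem_edgeSet hfT⟩

theorem cost_le_cost_of_edgeSet_equiv {T T' : SimpleGraph V} [Finite T'.edgeSet]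
    {w : Sym2 V → ℝ} (φ : T'.edgeSet ≃ T.edgeSet) (hφ : ∀ f : T'.edgeSet, w (φ f) ≤ w f) :
    cost w T ≤ cost w T' :=
  calc cost w T = ∑ᶠ e : T.edgeSet, w e := (finsum_set_coe_eq_finsum_mem _).symm
    _ = ∑ᶠ f : T'.edgeSet, w (φ f) := (finsum_comp_equiv φ).symm
    _ ≤ ∑ᶠ f : T'.edgeSet, w f := finsum_le_finsum' (Set.toFinite _) (Set.toFinite _) hφ
    _ = cost w T' := finsum_set_coe_eq_finsum_mem _

end

theorem mst_path_optimality_sufficient_general {V α : Type*} [Finite V] [Preorder α]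
    (G : SimpleGraph V) (w : Sym2 V → α) (T : SimpleGraph V) (hT : T.IsTree)
    (hpath : ∀ i j : V, G.Adj i j → s(i, j) ∉ T.edgeSet →
      ∀ p : T.Walk i j, p.IsPath → ∀ f ∈ p.edges, w s(i, j) ≥ w f)
    (T' : SimpleGraph V) (hT' : IsSpanningTree G T') :
    ∃ φ : T'.edgeSet ≃ T.edgeSet, ∀ f : T'.edgeSet, w (φ f) ≤ w f := by
  obtain ⟨φ, hinj, hφ⟩ := exists_injective_edgeSet_of_reachable hT'.2.isAcyclic
    (fun f e ↦ w e ≤ w f) fun i j hij ↦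
      reachable_fromEdgeSet_setOf_weight_le (hT.connected i j) (hpath i j (hT'.1 hij))
  have hcard : Nat.card T'.edgeSet = Nat.card T.edgeSet := Nat.add_right_cancel <|
    (isTree_iff_connected_and_card.1 hT'.2).2.trans (isTree_iff_connected_and_card.1 hT).2.symm
  exact ⟨.ofBijective φ ((Nat.bijective_iff_injective_and_card φ).2 ⟨hinj, hcard⟩), hφ⟩

/-- Path Optimality Condition, sufficiency: if `T` is a spanning tree of `G` such that
for every nontree edge `{i,j}` of `G` and every edge `{u,v}` on the unique path in `T`
from `i` to `j` one has `w {i,j} ≥ w {u,v}`, then `T` is a minimum spanning tree. -/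
theorem mst_path_optimality_sufficient {V : Type*} [Fintype V]
    (G : SimpleGraph V) (hG : G.Connected) (w : Sym2 V → ℝ)
    (T : SimpleGraph V) (hT : IsSpanningTree G T)
    (hpath : ∀ i j : V, G.Adj i j → s(i, j) ∉ T.edgeSet →
      ∀ p : T.Walk i j, p.IsPath → ∀ f ∈ p.edges, w s(i, j) ≥ w f) :
    IsMST G w T := by
  refine ⟨hT, fun T' hT' ↦ ?_⟩
  obtain ⟨φ, hφ⟩ := mst_path_optimality_sufficient_general G w T hT.2 hpath T' hT'
  exact cost_le_cost_of_edgeSet_equiv φ hφ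
end

section
/- Let T be a minimum spanning tree of G, let {i,j} be a nontree edge of G, and let r be an edge of maximum weight on the path P(T,i,j). Then the subgraph T_{i,j} obtained from T by removing the edge r and adding the edge {i,j} is a spanning tree of G containing {i,j}, and cost(T_{i,j}) ≤ cost(T') for every spanning tree T' of G that contains the edge {i,j}; i.e., T_{i,j} is a minimum spanning {i,j}-tree of G. -/
open SimpleGraph

/-!
Let `T'` be a spanning tree containing `{i,j}`. Removing `{i,j}` from `T'` separates `i` from `j`,
so some edge `f` of the path `P(T,i,j)` crosses this cut, and `T' - {i,j} + f` is a spanning tree.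
Minimality of `T` and `w f ≤ w r` give
`cost T ≤ cost T' - w {i,j} + w f ≤ cost T' - w {i,j} + w r`, which rearranges to
`cost T_{i,j} ≤ cost T'`.
-/

section Reachability

variable {V : Type*} {G : SimpleGraph V} {x y : V}

theorem connected_of_connected_sup_edge (hxy : G.Reachable x y)
    (h : (G ⊔ edge x y).Connected) : G.Connected := by
  by_cases hadj : G.Adj x y
  · rwa [sup_edge_of_adj _ hadj] at h
  · have hdel : (G ⊔ edge x y).deleteEdges {s(x, y)} = G := by
      simp [deleteEdges_sup, hadj]
    rw [← hdel]
    exact h.connected_delete_edge_of_not_isBridge (by rwa [isBridge_iff, hdel, not_not])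

theorem not_reachable_deleteEdges_of_mem_edges_s4 {r : Sym2 V} {p : G.Walk x y} (hG : G.IsAcyclic)
    (hp : p.IsPath) (hr : r ∈ p.edges) : ¬ (G.deleteEdges {r}).Reachable x y := by
  intro h
  obtain ⟨q, hq⟩ := h.exists_isPath
  have hle : G.deleteEdges {r} ≤ G := deleteEdges_le _
  have hpq : p = q.mapLe hle :=
    congrArg Subtype.val ((hG.subsingleton_path x y).elim ⟨p, hp⟩ ⟨q.mapLe hle, hq.mapLe hle⟩)
  rw [hpq, Walk.edges_mapLe_eq_edges] at hr
  simpa using q.edges_subset_edgeSet hr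

theorem exists_mem_edges_not_reachable {H : SimpleGraph V} (p : G.Walk x y)
    (h : ¬ H.Reachable x y) : ∃ u v, s(u, v) ∈ p.edges ∧ ¬ H.Reachable u v := by
  obtain ⟨d, hd, hfst, hsnd⟩ := p.exists_boundary_dart {z | H.Reachable x z} .rfl h
  exact ⟨d.fst, d.snd, List.mem_map_of_mem hd, fun huv => hsnd (hfst.trans huv)⟩

end Reachability

section SwapEdge

variable {V : Type*} {G T : SimpleGraph V} {e : Sym2 V} {u v : V}

/-- The edge exchange `T - e + f` in a graph `T`. As `fromEdgeSet` ignores loops, `f` is added only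
when it joins distinct vertices. -/
def swapEdge (T : SimpleGraph V) (e f : Sym2 V) : SimpleGraph V :=
  fromEdgeSet ((T.edgeSet \ {e}) ∪ {f})

theorem swapEdge_eq_deleteEdges_sup_edge (T : SimpleGraph V) (e : Sym2 V) (u v : V) :
    swapEdge T e s(u, v) = T.deleteEdges {e} ⊔ edge u v := by
  rw [swapEdge, fromEdgeSet_union, fromEdgeSet_sdiff, fromEdgeSet_edgeSet, deleteEdges, edge]

theorem edgeSet_swapEdge (T : SimpleGraph V) (e : Sym2 V) (huv : u ≠ v) :
    (swapEdge T e s(u, v)).edgeSet = insert s(u, v) (T.edgeSet \ {e}) := by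
  rw [swapEdge_eq_deleteEdges_sup_edge, edgeSet_sup, edgeSet_deleteEdges, edgeSet_edge_of_ne huv,
    Set.union_singleton]

theorem mem_edgeSet_swapEdge (T : SimpleGraph V) (e : Sym2 V) (huv : u ≠ v) :
    s(u, v) ∈ (swapEdge T e s(u, v)).edgeSet := by
  rw [edgeSet_swapEdge T e huv]
  exact Set.mem_insert _ _

theorem le_swapEdge_sup_edge (T : SimpleGraph V) (x y u v : V) :
    T ≤ swapEdge T s(x, y) s(u, v) ⊔ edge x y := by
  rw [swapEdge_eq_deleteEdges_sup_edge, deleteEdges, sup_right_comm]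
  exact le_sup_of_le_left le_sdiff_sup

theorem swapEdge_le (hT : T ≤ G) (e : Sym2 V) (huv : G.Adj u v) : swapEdge T e s(u, v) ≤ G := by
  rw [swapEdge_eq_deleteEdges_sup_edge]
  exact sup_le ((deleteEdges_le _).trans hT) ((edge_le_iff _).mpr (.inr huv))

theorem isAcyclic_swapEdge (hT : T.IsAcyclic) (h : ¬ (T.deleteEdges {e}).Reachable u v) :
    (swapEdge T e s(u, v)).IsAcyclic := by
  rw [swapEdge_eq_deleteEdges_sup_edge]
  exact (hT.anti (deleteEdges_le _)).sup_edge_of_not_reachable h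

theorem reachable_swapEdge {x y : V} (hT : T.Reachable u v)
    (h : ¬ (T.deleteEdges {s(x, y)}).Reachable u v) :
    (swapEdge T s(x, y) s(u, v)).Reachable x y := by
  have huv : u ≠ v := by rintro rfl; exact h .rfl
  have hmem := mem_edgeSet_swapEdge T s(x, y) huv
  by_contra hxy
  -- Otherwise `s(u, v)` is still a bridge after restoring `s(x, y)`, although the restored graph
  -- contains `T`, which joins `u` to `v` without `s(u, v)`.
  have huvT : s(u, v) ∉ T.edgeSet := by
    intro huvT
    have heq : s(u, v) = s(x, y) := by
      by_contra hne
      exact h (deleteEdges_adj.mpr ⟨huvT, hne⟩).reachable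
    exact hxy (mem_edgeSet _ |>.mp (heq ▸ hmem)).reachable
  have hbridge : (swapEdge T s(x, y) s(u, v)).IsBridge s(u, v) := by
    rw [swapEdge_eq_deleteEdges_sup_edge, isBridge_sup_edge]
    exact .of_not_reachable h
  have hle : T ≤ (swapEdge T s(x, y) s(u, v) ⊔ edge x y).deleteEdges {s(u, v)} :=
    calc
      T = T.deleteEdges {s(u, v)} :=
        (deleteEdges_eq_self.mpr (Set.disjoint_singleton_right.mpr huvT)).symm
      _ ≤ _ := deleteEdges_mono (le_swapEdge_sup_edge T x y u v)
  exact hbridge.sup_edge_of_not_reachable_of_isBridge hxy hmem (hT.mono hle)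

theorem connected_swapEdge (hT : T.Connected) (h : ¬ (T.deleteEdges {e}).Reachable u v) :
    (swapEdge T e s(u, v)).Connected := by
  induction e with
  | h x y =>
    exact connected_of_connected_sup_edge (reachable_swapEdge (hT.preconnected u v) h)
      (hT.mono (le_swapEdge_sup_edge T x y u v))

theorem isSpanningTree_swapEdge (hT : IsSpanningTree G T) (huv : G.Adj u v)
    (h : ¬ (T.deleteEdges {e}).Reachable u v) : IsSpanningTree G (swapEdge T e s(u, v)) :=
  ⟨swapEdge_le hT.1 e huv, connected_swapEdge hT.2.connected h, isAcyclic_swapEdge hT.2.isAcyclic h⟩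

theorem cost_swapEdge (w : Sym2 V → ℝ) (hw : (T.edgeSet ∩ w.support).Finite) (he : e ∈ T.edgeSet)
    (huv : u ≠ v) (h : ¬ (T.deleteEdges {e}).Adj u v) :
    cost w (swapEdge T e s(u, v)) + w e = cost w T + w s(u, v) := by
  have hnot : s(u, v) ∉ T.edgeSet \ {e} := by
    rwa [← edgeSet_deleteEdges, mem_edgeSet]
  have hremove : w e + ∑ᶠ f ∈ T.edgeSet \ {e}, w f = cost w T := by
    rw [← finsum_mem_singleton (f := w) (a := e)]
    exact finsum_mem_add_sdiff' (Set.singleton_subset_iff.mpr he) hw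
  have hadd : cost w (swapEdge T e s(u, v)) = w s(u, v) + ∑ᶠ f ∈ T.edgeSet \ {e}, w f := by
    rw [cost, edgeSet_swapEdge T e huv]
    exact finsum_mem_insert' w hnot (hw.subset (Set.inter_subset_inter_left _ Set.sdiff_subset))
  linarith

end SwapEdge

theorem mst_replacement_edge_general {V : Type*}
    (G : SimpleGraph V) (w : Sym2 V → ℝ) (hw : (G.edgeSet ∩ w.support).Finite)
    (T : SimpleGraph V) (hT : IsMST G w T)
    (i j : V) (hij : G.Adj i j)
    (p : T.Walk i j) (hp : p.IsPath)
    (r : Sym2 V) (hr : r ∈ p.edges) (hrmax : ∀ f ∈ p.edges, w f ≤ w r) :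
    IsSpanningTree G (swapEdge T r s(i, j)) ∧
    s(i, j) ∈ (swapEdge T r s(i, j)).edgeSet ∧
    ∀ T' : SimpleGraph V, IsSpanningTree G T' → s(i, j) ∈ T'.edgeSet →
      cost w (swapEdge T r s(i, j)) ≤ cost w T' := by
  have hfinite {S : SimpleGraph V} (hS : S ≤ G) : (S.edgeSet ∩ w.support).Finite :=
    hw.subset (Set.inter_subset_inter_left _ (edgeSet_mono hS))
  have hsep := not_reachable_deleteEdges_of_mem_edges_s4 hT.1.2.isAcyclic hp hr
  refine ⟨isSpanningTree_swapEdge hT.1 hij hsep, mem_edgeSet_swapEdge T r hij.ne,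
    fun T' hT' hijT' => ?_⟩
  have hbridge : T'.IsBridge s(i, j) := isAcyclic_iff_forall_isBridge.mp hT'.2.isAcyclic hijT'
  obtain ⟨x, y, hxy, hcross⟩ := exists_mem_edges_not_reachable p hbridge
  have hadj : G.Adj x y := hT.1.1 (p.adj_of_mem_edges hxy)
  have hmax : w s(x, y) ≤ w r := hrmax _ hxy
  have hmin : cost w T ≤ cost w (swapEdge T' s(i, j) s(x, y)) :=
    hT.2 _ (isSpanningTree_swapEdge hT' hadj hcross)
  have hcost := cost_swapEdge w (hfinite hT.1.1) (p.edges_subset_edgeSet hr) hij.ne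
    (mt Adj.reachable hsep)
  have hcost' := cost_swapEdge w (hfinite hT'.1) hijT' hadj.ne (mt Adj.reachable hcross)
  linarith

/-- Let `T` be an MST of `G`, `{i,j}` a nontree edge, `r` a maximum-weight edge on the
path `P(T,i,j)`. Then the graph `T_{i,j}` obtained from `T` by removing `r` and adding
`{i,j}` is a spanning tree of `G` containing `{i,j}`, of minimum cost among all spanning
trees of `G` containing `{i,j}`. -/
theorem mst_replacement_edge {V : Type*} [Fintype V]
    (G : SimpleGraph V) (hG : G.Connected) (w : Sym2 V → ℝ)
    (T : SimpleGraph V) (hT : IsMST G w T)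
    (i j : V) (hij : G.Adj i j) (hnt : s(i, j) ∉ T.edgeSet)
    (p : T.Walk i j) (hp : p.IsPath)
    (r : Sym2 V) (hr : r ∈ p.edges) (hrmax : ∀ f ∈ p.edges, w f ≤ w r) :
    IsSpanningTree G (fromEdgeSet ((T.edgeSet \ {r}) ∪ {s(i, j)})) ∧
    s(i, j) ∈ (fromEdgeSet ((T.edgeSet \ {r}) ∪ {s(i, j)})).edgeSet ∧
    ∀ T' : SimpleGraph V, IsSpanningTree G T' → s(i, j) ∈ T'.edgeSet →
      cost w (fromEdgeSet ((T.edgeSet \ {r}) ∪ {s(i, j)})) ≤ cost w T' :=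
  mst_replacement_edge_general G w (Set.toFinite _) T hT i j hij p hp r hr hrmax
end

section
/- Let T be a minimum spanning tree of G, let {i,j} be a nontree edge of G, let r be an edge of maximum weight on P(T,i,j), and let T_{i,j} be the spanning tree obtained from T by removing r and adding {i,j}. Then for every edge {k,l} of G that is a nontree edge of T with {k,l} ≠ {i,j}, the maximum weight of an edge different from {i,j} on the path P(T_{i,j},k,l) is at most the maximum weight of an edge on the path P(T,k,l); consequently r-cost(T_{i,j},{k,l}) ≥ r-cost(T,{k,l}). (If every edge of P(T_{i,j},k,l) equals {i,j}, the replacement cost in T_{i,j} is taken to be +∞ and the inequality holds by convention.) -/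
open SimpleGraph

/-!
The maximum weight on the path between two vertices of a forest is at most `c` exactly when the two
vertices are joined by edges of weight at most `c`, so it suffices to follow the subforest of `T`
formed by these edges through the exchange of `r` for `{i, j}`. If `w r > c`, that subforest does
not contain `r` and survives the exchange. If `w r ≤ c`, it contains all of `P(T, i, j)`, because
`r` has maximum weight there; the rest of this path and the edge `{i, j}` then provide a detour
around `r`, so that vertices joined before the exchange are still joined after it.
-/

section Exchange

variable {V : Type*} {G H : SimpleGraph V} {u v : V} {e f : Sym2 V}

/-- The graph `G - e + f`. For a spanning tree `T`, a nontree edge `s(i, j)` and an edge `r` on the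
path from `i` to `j` in `T`, the tree `T_{i,j}` is `exchangeEdge T r s(i, j)`. -/
def exchangeEdge (G : SimpleGraph V) (e f : Sym2 V) : SimpleGraph V :=
  fromEdgeSet ((G.edgeSet \ {e}) ∪ {f})

lemma exchangeEdge_eq_deleteEdges_sup_edge :
    exchangeEdge G e s(u, v) = G.deleteEdges {e} ⊔ edge u v := by
  rw [exchangeEdge, fromEdgeSet_union, fromEdgeSet_sdiff, fromEdgeSet_edgeSet, deleteEdges, edge]

lemma deleteEdges_le_exchangeEdge : G.deleteEdges {e} ≤ exchangeEdge G e f := by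
  rw [exchangeEdge, le_fromEdgeSet_iff, edgeSet_deleteEdges]
  exact Set.subset_union_left

lemma exchangeEdge_mono (h : H ≤ G) : exchangeEdge H e f ≤ exchangeEdge G e f :=
  fromEdgeSet_mono (Set.union_subset_union_left _ (Set.sdiff_subset_sdiff_left (edgeSet_mono h)))

lemma mem_edgeSet_of_mem_edgeSet_exchangeEdge {d : Sym2 V}
    (hd : d ∈ (exchangeEdge G e f).edgeSet) (hne : d ≠ f) : d ∈ G.edgeSet := by
  simp only [exchangeEdge, edgeSet_fromEdgeSet, Set.mem_sdiff, Set.mem_union,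
    Set.mem_singleton_iff] at hd
  exact (hd.1.resolve_right hne).1

lemma reachable_exchangeEdge_self : (exchangeEdge G e s(u, v)).Reachable u v := by
  rcases eq_or_ne u v with rfl | huv
  · rfl
  · exact Adj.reachable (by simp [exchangeEdge, huv])

lemma reachable_exchangeEdge_of_mem {p : G.Walk u v} (hp : p.IsTrail) (he : e ∈ p.edges) {x : V}
    (hx : x ∈ e) : (exchangeEdge G e s(u, v)).Reachable u x := by
  obtain ⟨y, rfl⟩ := hx
  rw [Sym2.eq_swap] at he ⊢
  by_contra hux
  refine hp.not_mem_edges_of_not_reachable (fun h ↦ hux ?_) (fun h ↦ hux ?_) he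
  · exact h.mono deleteEdges_le_exchangeEdge
  · exact reachable_exchangeEdge_self.trans (h.mono deleteEdges_le_exchangeEdge)

lemma adj_le_reachable_exchangeEdge {p : G.Walk u v} (hp : p.IsTrail) (he : e ∈ p.edges) :
    G.Adj ≤ (exchangeEdge G e s(u, v)).Reachable := by
  intro x y hxy
  by_cases hxye : s(x, y) = e
  · have hux := reachable_exchangeEdge_of_mem hp he (hxye ▸ Sym2.mem_mk_left x y)
    have huy := reachable_exchangeEdge_of_mem hp he (hxye ▸ Sym2.mem_mk_right x y)
    exact hux.symm.trans huy
  · have hadj : (G.deleteEdges {e}).Adj x y := by simp [hxy, hxye]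
    exact hadj.reachable.mono deleteEdges_le_exchangeEdge

lemma reachable_le_reachable_exchangeEdge {p : G.Walk u v} (hp : p.IsTrail) (he : e ∈ p.edges) :
    G.Reachable ≤ (exchangeEdge G e s(u, v)).Reachable := by
  rintro x y ⟨q⟩
  induction q with
  | nil => rfl
  | cons hadj _ ih => exact (adj_le_reachable_exchangeEdge hp he _ _ hadj).trans ih

end Exchange

section Acyclic

variable {V : Type*} {G H : SimpleGraph V} {u v : V} {p : G.Walk u v}

lemma edges_subset_edgeSet_of_reachable (hG : G.IsAcyclic) (hp : p.IsPath) (hH : H ≤ G)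
    (huv : H.Reachable u v) {d : Sym2 V} (hd : d ∈ p.edges) : d ∈ H.edgeSet := by
  obtain ⟨q, hq⟩ := huv.exists_isPath
  have hpq : p = q.mapLe hH := congrArg Subtype.val <|
    (hG.subsingleton_path u v).elim ⟨p, hp⟩ ⟨q.mapLe hH, hq.mapLe hH⟩
  rw [hpq, Walk.edges_mapLe_eq_edges] at hd
  exact q.edges_subset_edgeSet hd

lemma isAcyclic_exchangeEdge (hG : G.IsAcyclic) (hp : p.IsPath) {e : Sym2 V} (he : e ∈ p.edges) :
    (exchangeEdge G e s(u, v)).IsAcyclic := by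
  have huv : ¬ (G.deleteEdges {e}).Reachable u v := fun h ↦ by
    simpa using edges_subset_edgeSet_of_reachable hG hp (deleteEdges_le _) h he
  rw [exchangeEdge_eq_deleteEdges_sup_edge]
  exact (hG.anti (deleteEdges_le _)).sup_edge_of_not_reachable huv

end Acyclic

section Sublevel

variable {V α : Type*} [Preorder α] {G : SimpleGraph V} {w : Sym2 V → α} {c : α} {u v : V}

/-- The subgraph of `G` formed by the edges of weight at most `c`. Its reachability
relation encodes the bound `c` on the maximum weight of the edges of a path. -/
def sublevelGraph (G : SimpleGraph V) (w : Sym2 V → α) (c : α) : SimpleGraph V :=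
  fromEdgeSet {e ∈ G.edgeSet | w e ≤ c}

lemma mem_edgeSet_sublevelGraph {e : Sym2 V} :
    e ∈ (sublevelGraph G w c).edgeSet ↔ e ∈ G.edgeSet ∧ w e ≤ c := by
  have := G.not_isDiag_of_mem_edgeSet (e := e)
  simp only [sublevelGraph, edgeSet_fromEdgeSet, Set.mem_sdiff, Set.mem_sep_iff, Sym2.mem_diagSet]
  tauto

lemma sublevelGraph_le : sublevelGraph G w c ≤ G :=
  edgeSet_subset_edgeSet.1 fun _ he ↦ (mem_edgeSet_sublevelGraph.1 he).1

lemma edges_subset_edgeSet_sublevelGraph (p : G.Walk u v) (hpc : ∀ e ∈ p.edges, w e ≤ c) :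
    ∀ e ∈ p.edges, e ∈ (sublevelGraph G w c).edgeSet :=
  fun e he ↦ mem_edgeSet_sublevelGraph.2 ⟨p.edges_subset_edgeSet he, hpc e he⟩

lemma reachable_sublevelGraph_le_reachable_exchangeEdge {p : G.Walk u v} (hp : p.IsTrail)
    {e : Sym2 V} (he : e ∈ p.edges) (hmax : ∀ d ∈ p.edges, w d ≤ w e) :
    (sublevelGraph G w c).Reachable ≤
      (exchangeEdge (sublevelGraph G w c) e s(u, v)).Reachable := by
  by_cases hec : w e ≤ c
  · have hpc := edges_subset_edgeSet_sublevelGraph p fun d hd ↦ (hmax d hd).trans hec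
    have hptrail : (p.transfer _ hpc).IsTrail := by
      rw [Walk.isTrail_def, Walk.edges_transfer]
      exact hp.edges_nodup
    exact reachable_le_reachable_exchangeEdge hptrail (by rwa [Walk.edges_transfer])
  · have hdelete : (sublevelGraph G w c).deleteEdges {e} = sublevelGraph G w c := by
      rw [deleteEdges_eq_self, Set.disjoint_singleton_right, mem_edgeSet_sublevelGraph]
      exact fun h ↦ hec h.2
    exact Reachable.mono' (hdelete.ge.trans deleteEdges_le_exchangeEdge)

end Sublevel

theorem mst_replacement_cost_monotone_general {V α : Type*} [Preorder α] {w : Sym2 V → α}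
    {T : SimpleGraph V} (hT : T.IsAcyclic) {i j : V} {p : T.Walk i j} (hp : p.IsPath)
    {r : Sym2 V} (hr : r ∈ p.edges) (hrmax : ∀ f ∈ p.edges, w f ≤ w r)
    {k l : V} {q : T.Walk k l} {c : α} (hqc : ∀ f ∈ q.edges, w f ≤ c)
    {q' : (exchangeEdge T r s(i, j)).Walk k l} (hq' : q'.IsPath)
    {f : Sym2 V} (hf : f ∈ q'.edges) (hfij : f ≠ s(i, j)) : w f ≤ c := by
  have hkl : (sublevelGraph T w c).Reachable k l :=
    (q.transfer _ (edges_subset_edgeSet_sublevelGraph q hqc)).reachable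
  have hkl' : (exchangeEdge (sublevelGraph T w c) r s(i, j)).Reachable k l :=
    reachable_sublevelGraph_le_reachable_exchangeEdge hp.isTrail hr hrmax _ _ hkl
  have hfc : f ∈ (exchangeEdge (sublevelGraph T w c) r s(i, j)).edgeSet :=
    edges_subset_edgeSet_of_reachable (isAcyclic_exchangeEdge hT hp hr) hq'
      (exchangeEdge_mono sublevelGraph_le) hkl' hf
  exact (mem_edgeSet_sublevelGraph.1 (mem_edgeSet_of_mem_edgeSet_exchangeEdge hfc hfij)).2

/-- Let `T` be an MST of `G`, `{i,j}` a nontree edge, `r` a maximum-weight edge on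
`P(T,i,j)`, and `T_{i,j}` the tree obtained from `T` by removing `r` and adding `{i,j}`.
Let `{k,l}` be a nontree edge of `T` different from `{i,j}`, and `rkl` a maximum-weight
edge on `P(T,k,l)`. Then every edge `f ≠ {i,j}` on the path from `k` to `l` in `T_{i,j}`
satisfies `w f ≤ w rkl`; i.e. the maximum weight of a non-imposed edge on
`P(T_{i,j},k,l)` is at most the maximum weight of an edge on `P(T,k,l)`, hence
`r-cost(T_{i,j},{k,l}) ≥ r-cost(T,{k,l})` (vacuously when only `{i,j}` is left on the
path, matching the `+∞` convention). -/
theorem mst_replacement_cost_monotone {V : Type*} [Fintype V]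
    (G : SimpleGraph V) (hG : G.Connected) (w : Sym2 V → ℝ)
    (T : SimpleGraph V) (hT : IsMST G w T)
    (i j : V) (hij : G.Adj i j) (hnt : s(i, j) ∉ T.edgeSet)
    (p : T.Walk i j) (hp : p.IsPath)
    (r : Sym2 V) (hr : r ∈ p.edges) (hrmax : ∀ f ∈ p.edges, w f ≤ w r)
    (k l : V) (hkl : G.Adj k l) (hklnt : s(k, l) ∉ T.edgeSet)
    (hne : s(k, l) ≠ s(i, j))
    (q : T.Walk k l) (hq : q.IsPath)
    (rkl : Sym2 V) (hrkl : rkl ∈ q.edges) (hrklmax : ∀ f ∈ q.edges, w f ≤ w rkl) :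
    ∀ q' : (fromEdgeSet ((T.edgeSet \ {r}) ∪ {s(i, j)})).Walk k l, q'.IsPath →
      ∀ f ∈ q'.edges, f ≠ s(i, j) → w f ≤ w rkl := by
  intro q' hq' f hf hfij
  exact mst_replacement_cost_monotone_general hT.1.2.isAcyclic hp hr hrmax hrklmax hq' hf hfij
end

section
/- Let T be a minimum spanning tree of G and let I = {e₁, e₂, …, eₙ} be a set of distinct nontree edges of G, such that there exists at least one spanning tree of G containing all edges of I. Then every spanning tree T_I of G of minimum cost among the spanning trees containing all edges of I satisfies cost(T_I) ≥ cost(T) + Σ_{e ∈ I} r-cost(T,e), where for e = {i,j}, r-cost(T,e) = w(e) − max{ w(f) : f an edge on P(T,i,j) }. -/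
/-!
Starting from a spanning tree `S` that contains `I`, remove the edges of `I` one at a time. Removing
`e = s(i, j)` splits the current tree into the side of `i` and the side of `j`, and any walk of `G`
from `i` to `j` has an edge `f` crossing from one side to the other; adding `f` restores a spanning
tree and changes the cost by `w f - w e`. If the walk is the path `P(T, i, j)`, then `w f ≤ M e`, so
the cost drops by at least `w e - M e`. The tree reached at the end still costs at least as much as
the minimum spanning tree `T`.
-/

open SimpleGraph

section Exchange

variable {V : Type*} {G S : SimpleGraph V} {i j a b : V}

lemma reachable_deleteEdges_or_of_reachable {v : V} (h : S.Reachable i v) :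
    (S.deleteEdges {s(i, j)}).Reachable i v ∨ (S.deleteEdges {s(i, j)}).Reachable j v := by
  rw [reachable_iff_reflTransGen] at h
  induction h with
  | refl => exact .inl .rfl
  | @tail x y _ hxy ih =>
    by_cases he : s(x, y) = s(i, j)
    · obtain ⟨-, rfl⟩ | ⟨-, rfl⟩ := Sym2.eq_iff.1 he
      · exact .inr .rfl
      · exact .inl .rfl
    · have hxy' : (S.deleteEdges {s(i, j)}).Adj x y := deleteEdges_adj.2 ⟨hxy, he⟩
      exact ih.imp (·.trans hxy'.reachable) (·.trans hxy'.reachable)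

lemma connected_deleteEdges_sup_edge_s10 (hS : S.Connected)
    (ha : (S.deleteEdges {s(i, j)}).Reachable i a) (hb : (S.deleteEdges {s(i, j)}).Reachable j b) :
    (S.deleteEdges {s(i, j)} ⊔ edge a b).Connected := by
  have hle : S.deleteEdges {s(i, j)} ≤ S.deleteEdges {s(i, j)} ⊔ edge a b := le_sup_left
  have hab : (S.deleteEdges {s(i, j)} ⊔ edge a b).Reachable a b := by
    obtain rfl | hne := eq_or_ne a b
    · exact .rfl
    · exact Adj.reachable (by simp [edge_adj, hne])
  have hij : (S.deleteEdges {s(i, j)} ⊔ edge a b).Reachable i j :=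
    ((ha.mono hle).trans hab).trans (hb.mono hle).symm
  refine (connected_iff_exists_forall_reachable _).2 ⟨i, fun v ↦ ?_⟩
  obtain hv | hv := reachable_deleteEdges_or_of_reachable (j := j) (hS i v)
  · exact hv.mono hle
  · exact hij.trans (hv.mono hle)

lemma isTree_deleteEdges_sup_edge_s10 (hS : S.IsTree)
    (ha : (S.deleteEdges {s(i, j)}).Reachable i a)
    (hb : ¬ (S.deleteEdges {s(i, j)}).Reachable i b) :
    (S.deleteEdges {s(i, j)} ⊔ edge a b).IsTree where
  connected := connected_deleteEdges_sup_edge_s10 hS.connected ha <|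
    (reachable_deleteEdges_or_of_reachable (hS.connected i b)).resolve_left hb
  isAcyclic := (hS.isAcyclic.anti (deleteEdges_le _)).sup_edge_of_not_reachable
    fun hab ↦ hb (ha.trans hab)

lemma IsSpanningTree.exists_mem_edges_exchange (hS : IsSpanningTree G S) (hij : S.Adj i j)
    (p : G.Walk i j) :
    ∃ a b, s(a, b) ∈ p.edges ∧ ¬ (S.deleteEdges {s(i, j)}).Adj a b ∧
      IsSpanningTree G (S.deleteEdges {s(i, j)} ⊔ edge a b) := by
  have hbridge : ¬ (S.deleteEdges {s(i, j)}).Reachable i j :=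
    isBridge_iff.1 (isAcyclic_iff_forall_isBridge.1 hS.2.isAcyclic hij)
  obtain ⟨⟨⟨a, b⟩, hab⟩, hd, ha, hb⟩ := p.exists_boundary_dart
    {v | (S.deleteEdges {s(i, j)}).Reachable i v} .rfl hbridge
  have hle : S.deleteEdges {s(i, j)} ⊔ edge a b ≤ G :=
    sup_le ((deleteEdges_le _).trans hS.1) ((edge_le_iff _).2 (.inr hab))
  exact ⟨a, b, List.mem_map.2 ⟨_, hd, rfl⟩, fun h ↦ hb (ha.trans h.reachable), hle,
    isTree_deleteEdges_sup_edge_s10 hS.2 ha hb⟩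

end Exchange

section Cost

variable {V : Type*} {S : SimpleGraph V}

lemma cost_deleteEdges_add (w : Sym2 V → ℝ) (hS : S.edgeSet.Finite) {e : Sym2 V}
    (he : e ∈ S.edgeSet) : cost w (S.deleteEdges {e}) + w e = cost w S := by
  have hdel : (S.deleteEdges {e}).edgeSet.Finite := hS.subset (edgeSet_mono (deleteEdges_le _))
  have hinsert : S.edgeSet = insert e (S.deleteEdges {e}).edgeSet := by
    rw [edgeSet_deleteEdges, Set.insert_sdiff_singleton, Set.insert_eq_of_mem he]
  rw [cost, cost, hinsert, finsum_mem_insert _ (by simp) hdel, add_comm]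

lemma cost_sup_edge_s10 (w : Sym2 V → ℝ) (hS : S.edgeSet.Finite) {a b : V} (hne : a ≠ b)
    (hab : ¬ S.Adj a b) : cost w (S ⊔ edge a b) = cost w S + w s(a, b) := by
  rw [cost, cost, edgeSet_sup, edgeSet_edge_of_ne hne, Set.union_singleton,
    finsum_mem_insert _ (mt (mem_edgeSet S).1 hab) hS, add_comm]

end Cost

lemma IsSpanningTree.exists_cost_exchange {V : Type*} [Finite V] {G S : SimpleGraph V}
    (w : Sym2 V → ℝ) (hS : IsSpanningTree G S) {i j : V} (hij : S.Adj i j) (p : G.Walk i j) :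
    ∃ f ∈ p.edges, ∃ S', IsSpanningTree G S' ∧ S.deleteEdges {s(i, j)} ≤ S' ∧
      cost w S' + w s(i, j) = cost w S + w f := by
  obtain ⟨a, b, hp, hab, hS'⟩ := hS.exists_mem_edges_exchange hij p
  refine ⟨s(a, b), hp, _, hS', le_sup_left, ?_⟩
  rw [cost_sup_edge_s10 w (Set.toFinite _) (p.adj_of_mem_edges hp).ne hab,
    ← cost_deleteEdges_add w S.edgeSet.toFinite ((mem_edgeSet S).2 hij), add_right_comm]

theorem mst_imposed_edges_lower_bound_general {V : Type*} [Finite V] {G : SimpleGraph V}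
    {w : Sym2 V → ℝ} {T : SimpleGraph V} (hT : IsMST G w T) (I : Finset (Sym2 V)) (M : Sym2 V → ℝ)
    (hM : ∀ i j, s(i, j) ∈ I → ∃ p : G.Walk i j, ∀ f ∈ p.edges, w f ≤ M s(i, j))
    {S : SimpleGraph V} (hS : IsSpanningTree G S) (hIS : ∀ e ∈ I, e ∈ S.edgeSet) :
    cost w T + ∑ e ∈ I, (w e - M e) ≤ cost w S := by
  classical
  induction I using Finset.induction_on generalizing S with
  | empty => simpa using hT.2 S hS
  | insert e I heI ih =>
    induction e with | _ i j
    rw [Finset.forall_mem_insert] at hIS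
    obtain ⟨p, hp⟩ := hM i j (Finset.mem_insert_self _ _)
    obtain ⟨f, hf, S', hS', hle, hcost⟩ := hS.exists_cost_exchange w hIS.1 p
    have hIS' : ∀ e ∈ I, e ∈ S'.edgeSet := fun e he ↦ edgeSet_mono hle <| by
      rw [edgeSet_deleteEdges]
      exact ⟨hIS.2 e he, ne_of_mem_of_not_mem he heI⟩
    calc cost w T + ∑ e ∈ insert s(i, j) I, (w e - M e)
        = cost w T + ∑ e ∈ I, (w e - M e) + (w s(i, j) - M s(i, j)) := by
          rw [Finset.sum_insert heI]; ring
      _ ≤ cost w S' + (w s(i, j) - w f) := by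
          gcongr
          · exact ih (fun i j h ↦ hM i j (Finset.mem_insert_of_mem h)) hS' hIS'
          · exact hp f hf
      _ = cost w S := by linear_combination hcost

/-- Let `T` be an MST of `G` and `I` a set of distinct nontree edges of `G` such that
some spanning tree of `G` contains all edges of `I`. For `e = {i,j} ∈ I`, let `M e` be
the maximum weight of an edge on the path `P(T,i,j)`, so that
`r-cost(T,e) = w e - M e`. Then every minimum-cost spanning tree `TI` among the
spanning trees of `G` containing all edges of `I` satisfies
`cost TI ≥ cost T + ∑_{e ∈ I} (w e - M e)`. -/
theorem mst_imposed_edges_lower_bound {V : Type*} [Fintype V]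
    (G : SimpleGraph V) (hG : G.Connected) (w : Sym2 V → ℝ)
    (T : SimpleGraph V) (hT : IsMST G w T)
    (I : Finset (Sym2 V))
    (hI : ∀ e ∈ I, e ∈ G.edgeSet ∧ e ∉ T.edgeSet)
    (hex : ∃ T' : SimpleGraph V, IsSpanningTree G T' ∧ ∀ e ∈ I, e ∈ T'.edgeSet)
    (M : Sym2 V → ℝ)
    (hM : ∀ e ∈ I, ∀ i j : V, e = s(i, j) → ∀ p : T.Walk i j, p.IsPath →
      (∃ f ∈ p.edges, w f = M e) ∧ ∀ f ∈ p.edges, w f ≤ M e)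
    (TI : SimpleGraph V)
    (hTI : IsSpanningTree G TI ∧ (∀ e ∈ I, e ∈ TI.edgeSet) ∧
      ∀ T' : SimpleGraph V, IsSpanningTree G T' → (∀ e ∈ I, e ∈ T'.edgeSet) →
        cost w TI ≤ cost w T') :
    cost w TI ≥ cost w T + ∑ e ∈ I, (w e - M e) := by
  refine mst_imposed_edges_lower_bound_general hT I M (fun i j he ↦ ?_) hTI.1 hTI.2.1
  obtain ⟨p, hp⟩ := hT.1.2.connected.exists_isPath i j
  exact ⟨p.mapLe hT.1.1, by simpa only [Walk.edges_mapLe_eq_edges] using (hM _ he i j rfl p hp).2⟩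
end
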